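/- Let 2 ≤ m ≤ μ be integers with μ ≤ s^{ν+1}, and let i_1 < i_2 < ⋯ < i_{m−1} be integers with −(μ−1) ≤ i_1 and i_{m−1} ≤ −1. Let u be the unique integer with s^{2u−1} ≤ −i_1 < s^{2u+1}. Then 0 ≤ u ≤ ν/2 and #{ α ∈ ℤ : α ∈ ⋃_{v=1}^{m−1} (i_v + H) and α ∉ H } ≥ (m−1)·s^{ν/2−u}. -/

import Mathlib

/-- The set `S^i` of the description of the Weierstrass semigroup `H(Q_ν)` of the
ν-th function field of the Garcia–Stichtenoth tower over `𝔽_q`, `q = s^2`. -/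
def Sset (s ν i : ℕ) : Set ℕ :=
  if i = 0 then {0}
  else {x | ∃ k, 1 ≤ k ∧ k ≤ s ^ i - s ^ (i - 1) ∧
        x = s ^ ν - s ^ (ν - i + 1) + k * s ^ (ν - 2 * i + 1)}

/-- The set `S^∞ = {n : n ≥ c + 1}` where `c = s^ν - s^(ν/2)` is the conductor. -/
def Sinf (s ν : ℕ) : Set ℕ := {n | s ^ ν - s ^ (ν / 2) + 1 ≤ n}

/-- The Weierstrass semigroup `H = S^0 ∪ S^1 ∪ ⋯ ∪ S^(ν/2) ∪ S^∞ ⊆ ℕ`. -/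
def Hsemi (s ν : ℕ) : Set ℕ := (⋃ i ≤ ν / 2, Sset s ν i) ∪ Sinf s ν

/-- The semigroup `H` viewed as a subset of `ℤ`. -/
def HZ (s ν : ℕ) : Set ℤ := (fun n : ℕ => (n : ℤ)) '' Hsemi s ν

/-! Below the threshold `s ^ ν - s ^ (ν - a)`, the semigroup `H` is `S^0 ∪ ⋯ ∪ S^a`: it has exactly
`s ^ a` elements there, all of them divisible by `d = s ^ (ν - 2 * a + 1)`. Translating these
elements by integers strictly between `-d` and `0` produces pairwise distinct integers that still
lie below the threshold but are not divisible by `d`, hence are not in `H`. For even `ν`, the choice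
`a = ν / 2 - u` makes `d = s ^ (2 * u + 1)`. -/

open Set Pointwise

section Translates

lemma finite_add_sdiff {G : Type*} [Add G] [Preorder G] [AddLeftMono G] [AddRightMono G]
    [LocallyFiniteOrder G] {A I : Set G} (hI : BddBelow I) (hA : BddBelow A) (hAc : BddAbove Aᶜ) :
    ((I + A) \ A).Finite :=
  ((hI.add hA).mono sdiff_subset).finite_of_bddAbove (hAc.mono fun _ hx ↦ hx.2)

lemma injOn_add_of_forall_dvd {R : Type*} [CommRing R] {A I : Set R} {d : R}
    (hA : ∀ x ∈ A, d ∣ x) (hI : ∀ i ∈ I, ∀ j ∈ I, d ∣ i - j → i = j) :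
    InjOn (fun p : R × R ↦ p.1 + p.2) (I ×ˢ A) := by
  rintro ⟨i, x⟩ ⟨hi, hx⟩ ⟨j, y⟩ ⟨hj, hy⟩ (h : i + x = j + y)
  have hsub : i - j = y - x := by linear_combination h
  obtain rfl : i = j := hI i hi j hj (hsub ▸ dvd_sub (hA y hy) (hA x hx))
  rw [add_left_cancel h]

lemma add_notMem_of_not_dvd {R : Type*} [CommRing R] [Preorder R] [AddRightMono R] {A : Set R}
    {b d i x : R} (hA : ∀ y ∈ A ∩ Iic b, d ∣ y) (hi₀ : i ≤ 0) (hi : ¬d ∣ i)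
    (hx : x ∈ A ∩ Iic b) : i + x ∉ A := fun hmem ↦
  have hle : i + x ≤ b := (add_le_of_nonpos_left hi₀).trans hx.2
  hi ((dvd_add_left (hA x hx)).1 (hA _ ⟨hmem, hle⟩))

lemma ncard_mul_ncard_le_ncard_add_sdiff {A I : Set ℤ} {b d : ℤ} (hA : ∀ x ∈ A ∩ Iic b, d ∣ x)
    (hI : I ⊆ Ioo (-d) 0) (hfin : ((I + A) \ A).Finite) :
    I.ncard * (A ∩ Iic b).ncard ≤ ((I + A) \ A).ncard := by
  have hdistinct : ∀ i ∈ I, ∀ j ∈ I, d ∣ i - j → i = j := fun i hi j hj hdvd ↦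
    sub_eq_zero.1 <| Int.eq_zero_of_abs_lt_dvd hdvd <| by
      grind [mem_Ioo.1 (hI hi), mem_Ioo.1 (hI hj)]
  have hnot_dvd : ∀ i ∈ I, ¬d ∣ i := fun i hi hdvd ↦
    (hI hi).2.ne <| Int.eq_zero_of_abs_lt_dvd hdvd <| by grind [mem_Ioo.1 (hI hi)]
  rw [← ncard_prod]
  refine ncard_le_ncard_of_injOn _ ?_ (injOn_add_of_forall_dvd hA hdistinct) hfin
  rintro ⟨i, x⟩ ⟨hi, hx⟩
  exact ⟨add_mem_add hi hx.1, add_notMem_of_not_dvd hA (hI hi).2.le (hnot_dvd i hi) hx⟩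

end Translates

section Sset

variable {s ν i a : ℕ}

lemma Sset_zero : Sset s ν 0 = {0} := if_pos rfl

lemma Sset_succ (hi : 2 * (i + 1) ≤ ν) :
    Sset s ν (i + 1) = (fun k ↦ s ^ ν - s ^ (ν - i) + k * s ^ (ν - 2 * i - 1)) ''
      Icc 1 (s ^ (i + 1) - s ^ i) := by
  have h₁ : ν - (i + 1) + 1 = ν - i := by lia
  have h₂ : ν - 2 * (i + 1) + 1 = ν - 2 * i - 1 := by lia
  ext x
  simp only [Sset, if_neg i.succ_ne_zero, Nat.add_sub_cancel, h₁, h₂, mem_ofPred_eq, mem_image,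
    mem_Icc, and_assoc, eq_comm (a := x)]

lemma Sset_succ_subset_Ioc (hs : 0 < s) (hi : 2 * (i + 1) ≤ ν) :
    Sset s ν (i + 1) ⊆ Ioc (s ^ ν - s ^ (ν - i)) (s ^ ν - s ^ (ν - (i + 1))) := by
  rw [Sset_succ hi]
  rintro _ ⟨k, ⟨hk₁, hk₂⟩, rfl⟩
  have hpos : 0 < k * s ^ (ν - 2 * i - 1) := by positivity
  have hstep : k * s ^ (ν - 2 * i - 1) ≤ s ^ (ν - i) - s ^ (ν - (i + 1)) := calc
    _ ≤ (s ^ (i + 1) - s ^ i) * s ^ (ν - 2 * i - 1) := by gcongr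
    _ = s ^ (ν - i) - s ^ (ν - (i + 1)) := by
      rw [Nat.sub_mul, ← pow_add, ← pow_add]
      congr 2 <;> lia
  have h₁ : s ^ (ν - i) ≤ s ^ ν := Nat.pow_le_pow_right hs (by lia)
  have h₂ : s ^ (ν - (i + 1)) ≤ s ^ (ν - i) := Nat.pow_le_pow_right hs (by lia)
  constructor <;> lia

lemma ncard_Sset_succ (hs : 0 < s) (hi : 2 * (i + 1) ≤ ν) :
    (Sset s ν (i + 1)).ncard = s ^ (i + 1) - s ^ i := by
  have hinj : Function.Injective
      (fun k ↦ s ^ ν - s ^ (ν - i) + k * s ^ (ν - 2 * i - 1)) :=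
    (add_right_injective _).comp (mul_left_injective₀ (by positivity))
  rw [Sset_succ hi, ncard_image_of_injective _ hinj, ← Finset.coe_Icc, ncard_coe_finset,
    Nat.card_Icc, Nat.add_sub_cancel]

lemma pow_dvd_of_mem_Sset (hi : 2 * i ≤ ν) {x : ℕ} (hx : x ∈ Sset s ν i) :
    s ^ (ν - 2 * i + 1) ∣ x := by
  cases i with
  | zero => simp_all [Sset_zero]
  | succ i =>
    rw [Sset_succ hi] at hx
    obtain ⟨k, -, rfl⟩ := hx
    refine dvd_add (Nat.dvd_sub ?_ ?_) (Dvd.dvd.mul_left ?_ _) <;> exact pow_dvd_pow s (by lia)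

lemma accumulate_Sset_subset_Iic (hs : 0 < s) (ha : 2 * a ≤ ν) :
    accumulate (Sset s ν) a ⊆ Iic (s ^ ν - s ^ (ν - a)) := by
  intro x hx
  obtain ⟨i, hia, hxi⟩ := mem_accumulate.1 hx
  cases i with
  | zero => simp_all [Sset_zero]
  | succ i =>
    have hpow : s ^ (ν - a) ≤ s ^ (ν - (i + 1)) := Nat.pow_le_pow_right hs (by lia)
    exact (Sset_succ_subset_Ioc hs (by lia) hxi).2.trans (Nat.sub_le_sub_left hpow _)

lemma ncard_accumulate_Sset (hs : 0 < s) (ha : 2 * a ≤ ν) :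
    (accumulate (Sset s ν) a).ncard = s ^ a := by
  induction a with
  | zero => simp [Sset_zero]
  | succ a ih =>
    have hlow := accumulate_Sset_subset_Iic (a := a) (ν := ν) hs (by lia)
    have hhigh := Sset_succ_subset_Ioc hs ha
    have hdisj : Disjoint (accumulate (Sset s ν) a) (Sset s ν (a + 1)) :=
      (Iic_disjoint_Ioc le_rfl).mono hlow hhigh
    rw [accumulate_succ, ncard_union_eq hdisj ((finite_Iic _).subset hlow)
      ((finite_Ioc _ _).subset hhigh), ih (by lia), ncard_Sset_succ hs ha]
    exact Nat.add_sub_cancel' (Nat.pow_le_pow_right hs a.le_succ)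

end Sset

section Hsemi

variable {s ν a : ℕ}

lemma Hsemi_inter_Iic (hs : 0 < s) (ha : 2 * a ≤ ν) :
    Hsemi s ν ∩ Iic (s ^ ν - s ^ (ν - a)) = accumulate (Sset s ν) a := by
  refine Subset.antisymm ?_ (subset_inter ?_ (accumulate_Sset_subset_Iic hs ha))
  · rintro x ⟨hx | (hx : _ + 1 ≤ x), (hxa : x ≤ _)⟩
    · obtain ⟨i, hiν, hxi⟩ := mem_iUnion₂.1 hx
      refine mem_accumulate.2 ⟨i, ?_, hxi⟩
      by_contra! hai
      obtain ⟨j, rfl⟩ := Nat.exists_eq_succ_of_ne_zero (Nat.ne_zero_of_lt hai)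
      have hxj := (Sset_succ_subset_Ioc hs (by lia) hxi).1
      have hpow : s ^ (ν - j) ≤ s ^ (ν - a) := Nat.pow_le_pow_right hs (by lia)
      lia
    · have hpow : s ^ (ν / 2) ≤ s ^ (ν - a) := Nat.pow_le_pow_right hs (by lia)
      lia
  · exact (accumulate_subset_accumulate (by lia)).trans subset_union_left

lemma HZ_inter_Iic (hs : 0 < s) (ha : 2 * a ≤ ν) :
    HZ s ν ∩ Iic ((s ^ ν - s ^ (ν - a) : ℕ) : ℤ) = Nat.cast '' accumulate (Sset s ν) a := by
  rw [← Hsemi_inter_Iic hs ha, HZ, ← image_inter_preimage]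
  congr! 2
  ext x
  simp only [mem_preimage, mem_Iic, Nat.cast_le]

lemma pow_dvd_of_mem_HZ_inter_Iic (hs : 0 < s) (ha : 2 * a ≤ ν) {x : ℤ}
    (hx : x ∈ HZ s ν ∩ Iic ((s ^ ν - s ^ (ν - a) : ℕ) : ℤ)) :
    (s : ℤ) ^ (ν - 2 * a + 1) ∣ x := by
  rw [HZ_inter_Iic hs ha] at hx
  obtain ⟨n, hn, rfl⟩ := hx
  obtain ⟨i, hia, hni⟩ := mem_accumulate.1 hn
  have hdvd : s ^ (ν - 2 * a + 1) ∣ n :=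
    (pow_dvd_pow s (by lia)).trans (pow_dvd_of_mem_Sset (by lia) hni)
  exact_mod_cast hdvd

lemma bddBelow_HZ : BddBelow (HZ s ν) :=
  ⟨0, forall_mem_image.2 fun n _ ↦ n.cast_nonneg⟩

lemma bddAbove_compl_HZ : BddAbove (HZ s ν)ᶜ := by
  refine ⟨(s ^ ν : ℕ), fun x hx ↦ not_lt.1 fun hlt ↦ hx ?_⟩
  lift x to ℕ using by lia
  exact mem_image_of_mem _ (Or.inr (show _ + 1 ≤ x by lia))

lemma ncard_mul_pow_le_ncard_add_HZ_sdiff (hs : 0 < s) (ha : 2 * a ≤ ν) {I : Set ℤ}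
    (hI : I ⊆ Ioo (-(s : ℤ) ^ (ν - 2 * a + 1)) 0) :
    I.ncard * s ^ a ≤ ((I + HZ s ν) \ HZ s ν).ncard := by
  have hcard : (HZ s ν ∩ Iic ((s ^ ν - s ^ (ν - a) : ℕ) : ℤ)).ncard = s ^ a := by
    rw [HZ_inter_Iic hs ha, ncard_image_of_injective _ Nat.cast_injective,
      ncard_accumulate_Sset hs ha]
  rw [← hcard]
  exact ncard_mul_ncard_le_ncard_add_sdiff (fun x ↦ pow_dvd_of_mem_HZ_inter_Iic hs ha) hI
    (finite_add_sdiff (bddBelow_Ioo.mono hI) bddBelow_HZ bddAbove_compl_HZ)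

lemma setOf_translate_notMem_HZ_eq {f : ℕ → ℤ} {n : ℕ} :
    {α : ℤ | (∃ v : ℕ, 1 ≤ v ∧ v ≤ n ∧ ∃ h ∈ Hsemi s ν, α = f v + (h : ℤ)) ∧ α ∉ HZ s ν} =
      (f '' Icc 1 n + HZ s ν) \ HZ s ν := by
  ext α
  simp only [HZ, mem_ofPred_eq, mem_sdiff, mem_add, exists_mem_image, mem_Icc, and_assoc,
    eq_comm (a := α)]

end Hsemi

lemma nonneg_and_two_mul_le_of_zpow_le_of_lt_zpow {K : Type*} [Field K] [LinearOrder K]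
    [IsStrictOrderedRing K] {b x : K} {u n : ℤ} (hb : 1 < b) (hx : 1 ≤ x) (hxn : x < b ^ n)
    (hu : b ^ (2 * u - 1) ≤ x) (hu' : x < b ^ (2 * u + 1)) : 0 ≤ u ∧ 2 * u ≤ n := by
  have hpos : 0 < 2 * u + 1 := (one_lt_zpow_iff_right₀ hb).1 (hx.trans_lt hu')
  have hlt : 2 * u - 1 < n := (zpow_lt_zpow_iff_right₀ hb).1 (hu.trans_lt hxn)
  lia

/-- For `2 ≤ m ≤ μ ≤ s^(ν+1)`, indices `-(μ-1) ≤ i_1 < ⋯ < i_(m-1) ≤ -1`, and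
`u` the unique integer with `s^(2u-1) ≤ -i_1 < s^(2u+1)`, one has `0 ≤ u ≤ ν/2`
and `#{α ∈ ⋃_{v=1}^{m-1}(i_v + H) : α ∉ H} ≥ (m-1)·s^(ν/2-u)`. -/
theorem stmt13 (s ν : ℕ) (hs : 2 ≤ s) (hν : Even ν) (hν0 : 0 < ν)
    (m μ : ℕ) (hm : 2 ≤ m) (hmμ : m ≤ μ) (hμ : μ ≤ s ^ (ν + 1))
    (i : ℕ → ℤ)
    (hmono : ∀ v w, 1 ≤ v → v < w → w ≤ m - 1 → i v < i w)
    (hlow : -((μ : ℤ) - 1) ≤ i 1) (hhigh : i (m - 1) ≤ -1)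
    (u : ℤ)
    (hu1 : (s : ℚ) ^ (2 * u - 1) ≤ ((-(i 1) : ℤ) : ℚ))
    (hu2 : ((-(i 1) : ℤ) : ℚ) < (s : ℚ) ^ (2 * u + 1)) :
    0 ≤ u ∧ u ≤ (ν : ℤ) / 2 ∧
    ((m : ℚ) - 1) * (s : ℚ) ^ ((ν : ℤ) / 2 - u) ≤
      ({α : ℤ | (∃ v : ℕ, 1 ≤ v ∧ v ≤ m - 1 ∧ ∃ h ∈ Hsemi s ν, α = i v + (h : ℤ)) ∧
        α ∉ HZ s ν}.ncard : ℚ) := by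
  have hi : StrictMonoOn i (Icc 1 (m - 1)) := fun v hv w hw hvw ↦ hmono v w hv.1 hvw hw.2
  have hI : i '' Icc 1 (m - 1) ⊆ Icc (i 1) (-1) :=
    hi.monotoneOn.image_Icc_subset.trans (Icc_subset_Icc_right hhigh)
  have hi₁ : i 1 ≤ -1 := (hI (mem_image_of_mem i ⟨le_rfl, by lia⟩)).2
  have hi₁_lt : -(i 1) < (s : ℤ) ^ (ν + 1) := by zify at hμ; lia
  obtain ⟨hu₀, huν⟩ := nonneg_and_two_mul_le_of_zpow_le_of_lt_zpow (n := (ν + 1 : ℕ))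
    (mod_cast hs) (mod_cast (by lia : 1 ≤ -(i 1))) (mod_cast hi₁_lt) hu1 hu2
  obtain ⟨N, rfl⟩ := hν
  refine ⟨hu₀, by lia, ?_⟩
  obtain ⟨a, ha⟩ : ∃ a : ℕ, ((N + N : ℕ) : ℤ) / 2 - u = a := Int.eq_ofNat_of_zero_le (by lia)
  have hsub : i '' Icc 1 (m - 1) ⊆ Ioo (-(s : ℤ) ^ (N + N - 2 * a + 1)) 0 := by
    rw [show 2 * u + 1 = ((N + N - 2 * a + 1 : ℕ) : ℤ) by lia] at hu2
    have : -(i 1) < (s : ℤ) ^ (N + N - 2 * a + 1) := mod_cast hu2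
    exact hI.trans (Icc_subset_Ioo (by lia) (by lia))
  have hcard : (i '' Icc 1 (m - 1)).ncard = m - 1 := by simp [hi.injOn.ncard_image]
  have hcount := ncard_mul_pow_le_ncard_add_HZ_sdiff (by lia) (by lia) hsub
  rw [hcard] at hcount
  rw [setOf_translate_notMem_HZ_eq, ha, zpow_natCast, ← Nat.cast_pred (by lia)]
  exact_mod_cast hcount
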